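/- arXiv:2404.09800 — 2 statements merged into one kernel-verified Lean document; each statement's English description precedes it below -/
import Mathlib

section
/- For every α ∈ (0,1) and every u ∈ ℝ: (α/Γ(1−α)) · ∫₀^∞ v^{−(1+α)} (1 − e^{−i u v}) dv = |u|^α e^{i (πα/2) sgn(u)}, where the (absolutely convergent) integral is a complex-valued Lebesgue integral over (0,∞). -/
open Real
open scoped Topology

noncomputable section

open MeasureTheory Set

/-- The integrand `v ^ (-(1 + α)) * (1 - e ^ (-z v))` of the Bernstein representation of `z ^ α`. -/
def bernsteinIntegrand (α : ℝ) (z : ℂ) (v : ℝ) : ℂ :=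
  ((v ^ (-(1 + α)) : ℝ) : ℂ) * (1 - Complex.exp (-(z * (v : ℂ))))

/-- The integral `∫₀^∞ v ^ (-(1 + α)) * (1 - e ^ (-z v)) dv`. -/
def bernsteinIntegral (α : ℝ) (z : ℂ) : ℂ :=
  ∫ v in Ioi (0 : ℝ), bernsteinIntegrand α z v

lemma norm_one_sub_exp_le {w : ℂ} (hw : w.re ≤ 0) :
    ‖1 - Complex.exp w‖ ≤ 2 * min 1 ‖w‖ := by
  have h2 : ‖1 - Complex.exp w‖ ≤ 2 := by
    refine (norm_sub_le _ _).trans ?_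
    have : Real.exp w.re ≤ 1 := Real.exp_le_one_iff.mpr hw
    rw [norm_one, Complex.norm_exp]
    linarith
  rcases le_total ‖w‖ 1 with h | h
  · rw [min_eq_right h, norm_sub_rev]
    exact Complex.norm_exp_sub_one_le h
  · rw [min_eq_left h]
    linarith

lemma integrableOn_rpow_mul_min {α : ℝ} (hα : α ∈ Ioo (0 : ℝ) 1) :
    IntegrableOn (fun v : ℝ => v ^ (-(1 + α)) * min 1 v) (Ioi 0) := by
  rw [← Ioc_union_Ioi_eq_Ioi zero_le_one]
  refine IntegrableOn.union ?_ ?_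
  · have h : IntegrableOn (fun v : ℝ => v ^ (-α)) (Ioc 0 1) :=
      (intervalIntegrable_iff_integrableOn_Ioc_of_le zero_le_one).mp
        (intervalIntegral.intervalIntegrable_rpow' (by linarith [hα.2]))
    refine h.congr_fun (fun v hv => ?_) measurableSet_Ioc
    simp only [min_eq_right hv.2]
    rw [← Real.rpow_add_one hv.1.ne']
    congr 1
    ring
  · have h : IntegrableOn (fun v : ℝ => v ^ (-(1 + α))) (Ioi 1) :=
      integrableOn_Ioi_rpow_of_lt (by linarith [hα.1]) zero_lt_one
    refine h.congr_fun (fun v hv => ?_) measurableSet_Ioi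
    simp [min_eq_left (le_of_lt (mem_Ioi.mp hv))]

lemma norm_bernsteinIntegrand_le (α : ℝ) {z : ℂ} (hz : 0 ≤ z.re) {v : ℝ} (hv : 0 < v) :
    ‖bernsteinIntegrand α z v‖ ≤ 2 * (1 + ‖z‖) * (v ^ (-(1 + α)) * min 1 v) := by
  have hw : (-(z * (v : ℂ))).re ≤ 0 := by
    simpa using mul_nonneg hz hv.le
  have hmin : min 1 ‖-(z * (v : ℂ))‖ ≤ (1 + ‖z‖) * min 1 v := by
    rw [norm_neg, norm_mul, Complex.norm_real, Real.norm_of_nonneg hv.le]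
    rcases le_total 1 v with h | h
    · rw [min_eq_left h]
      exact (min_le_left _ _).trans (by linarith [norm_nonneg z])
    · rw [min_eq_right h]
      exact (min_le_right _ _).trans (by nlinarith)
  have hp : 0 ≤ v ^ (-(1 + α)) := Real.rpow_nonneg hv.le _
  rw [bernsteinIntegrand, norm_mul, Complex.norm_real, Real.norm_of_nonneg hp]
  calc v ^ (-(1 + α)) * ‖1 - Complex.exp (-(z * (v : ℂ)))‖
      ≤ v ^ (-(1 + α)) * (2 * ((1 + ‖z‖) * min 1 v)) := by
        gcongr
        exact (norm_one_sub_exp_le hw).trans (by gcongr)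
    _ = _ := by ring

lemma measurable_bernsteinIntegrand (α : ℝ) (z : ℂ) : Measurable (bernsteinIntegrand α z) := by
  unfold bernsteinIntegrand
  fun_prop

lemma integrableOn_bernsteinIntegrand {α : ℝ} (hα : α ∈ Ioo (0 : ℝ) 1) {z : ℂ}
    (hz : 0 ≤ z.re) : IntegrableOn (bernsteinIntegrand α z) (Ioi 0) := by
  refine Integrable.mono' ((integrableOn_rpow_mul_min hα).const_mul (2 * (1 + ‖z‖)))
    (measurable_bernsteinIntegrand α z).aestronglyMeasurable ?_
  filter_upwards [ae_restrict_mem measurableSet_Ioi] with v hv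
  exact norm_bernsteinIntegrand_le α hz hv

lemma bernsteinIntegral_real_mul (α : ℝ) (z : ℂ) {t : ℝ} (ht : 0 < t) :
    bernsteinIntegral α (t * z) = ((t ^ α : ℝ) : ℂ) * bernsteinIntegral α z := by
  have h : ∀ v ∈ Ioi (0 : ℝ), bernsteinIntegrand α (t * z) v
      = ((t ^ (1 + α) : ℝ) : ℂ) * bernsteinIntegrand α z (t * v) := by
    intro v hv
    have hr : v ^ (-(1 + α)) = t ^ (1 + α) * (t * v) ^ (-(1 + α)) := by
      rw [Real.mul_rpow ht.le (le_of_lt hv), ← mul_assoc, ← Real.rpow_add ht]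
      simp
    simp only [bernsteinIntegrand]
    rw [hr]
    push_cast
    ring_nf
  rw [bernsteinIntegral, setIntegral_congr_fun measurableSet_Ioi h, integral_const_mul,
    integral_comp_mul_left_Ioi (bernsteinIntegrand α z) 0 ht, mul_zero, Complex.real_smul,
    ← mul_assoc, ← Complex.ofReal_mul, bernsteinIntegral, Real.rpow_add ht, Real.rpow_one]
  congr 2
  field_simp

lemma hasDerivAt_bernsteinIntegral {α : ℝ} (hα : α ∈ Ioo (0 : ℝ) 1) {z : ℂ} (hz : 0 < z.re) :
    HasDerivAt (bernsteinIntegral α)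
      (∫ v in Ioi (0 : ℝ), ((v ^ (-α) : ℝ) : ℂ) * Complex.exp (-(z * (v : ℂ)))) z := by
  have hbound : IntegrableOn (fun v : ℝ => v ^ (-α) * Real.exp (-(z.re / 2) * v)) (Ioi 0) := by
    have := integrableOn_rpow_mul_exp_neg_mul_rpow (p := 1) (s := -α) (b := z.re / 2)
      (by linarith [hα.2]) one_pos (by linarith)
    simpa using this
  refine (hasDerivAt_integral_of_dominated_loc_of_deriv_le
    (F := bernsteinIntegrand α)
    (F' := fun z v => ((v ^ (-α) : ℝ) : ℂ) * Complex.exp (-(z * (v : ℂ))))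
    (s := {w : ℂ | z.re / 2 < w.re})
    ((isOpen_lt continuous_const Complex.continuous_re).mem_nhds (by simp; linarith))
    (Filter.Eventually.of_forall fun w =>
      (measurable_bernsteinIntegrand α w).aestronglyMeasurable)
    (integrableOn_bernsteinIntegrand hα hz.le) ?_ ?_ hbound ?_).2
  · exact Measurable.aestronglyMeasurable (by fun_prop)
  · filter_upwards [ae_restrict_mem measurableSet_Ioi] with v hv w hw
    have hv' : 0 < v := hv
    have hw' : z.re / 2 < w.re := hw
    rw [norm_mul, Complex.norm_real, Real.norm_of_nonneg (Real.rpow_nonneg hv'.le _),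
      Complex.norm_exp]
    gcongr
    simp only [Complex.neg_re, Complex.re_mul_ofReal]
    nlinarith
  · filter_upwards [ae_restrict_mem measurableSet_Ioi] with v hv w _
    have hv' : 0 < v := hv
    have h := ((((hasDerivAt_id w).mul_const (v : ℂ)).neg.cexp).const_sub 1).const_mul
      ((v ^ (-(1 + α)) : ℝ) : ℂ)
    have hr : v ^ (-α) = v ^ (-(1 + α)) * v := by
      rw [← Real.rpow_add_one hv'.ne']
      congr 1
      ring
    refine h.congr_deriv ?_
    rw [hr]
    push_cast
    simp
    ring

/-- Euler's identity for the homogeneous function `bernsteinIntegral α`. -/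
lemma integral_mul_self_eq_mul_bernsteinIntegral {α : ℝ} (hα : α ∈ Ioo (0 : ℝ) 1) {z : ℂ}
    (hz : 0 < z.re) :
    (∫ v in Ioi (0 : ℝ), ((v ^ (-α) : ℝ) : ℂ) * Complex.exp (-(z * (v : ℂ)))) * z
      = α * bernsteinIntegral α z := by
  have h1 : HasDerivAt (fun t : ℝ => bernsteinIntegral α (t * z))
      ((∫ v in Ioi (0 : ℝ), ((v ^ (-α) : ℝ) : ℂ) * Complex.exp (-(z * (v : ℂ)))) * z) 1 := by
    have hlin : HasDerivAt (fun w : ℂ => w * z) z ((1 : ℝ) : ℂ) := by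
      simpa using (hasDerivAt_id ((1 : ℝ) : ℂ)).mul_const z
    have hF := hasDerivAt_bernsteinIntegral hα hz
    have hz1 : z = ((1 : ℝ) : ℂ) * z := by simp
    exact (HasDerivAt.comp_of_eq ((1 : ℝ) : ℂ) hF hlin hz1).comp_ofReal
  have h2 : HasDerivAt (fun t : ℝ => ((t ^ α : ℝ) : ℂ) * bernsteinIntegral α z)
      (α * bernsteinIntegral α z) 1 := by
    have h := (Real.hasDerivAt_rpow_const (x := 1) (p := α) (Or.inl one_ne_zero)).ofReal_comp
    simpa using h.mul_const (bernsteinIntegral α z)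
  refine h1.unique (h2.congr_of_eventuallyEq ?_)
  filter_upwards [lt_mem_nhds (zero_lt_one (α := ℝ))] with t ht
  exact bernsteinIntegral_real_mul α z ht

lemma mul_bernsteinIntegral_one {α : ℝ} (hα : α ∈ Ioo (0 : ℝ) 1) :
    α * bernsteinIntegral α 1 = (Real.Gamma (1 - α) : ℂ) := by
  rw [← integral_mul_self_eq_mul_bernsteinIntegral hα (by simp), mul_one,
    Real.Gamma_eq_integral (by linarith [hα.2]), ← integral_complex_ofReal]
  refine setIntegral_congr_fun measurableSet_Ioi fun v _ => ?_
  simp [mul_comm]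

lemma bernsteinIntegral_eq_cpow_of_re_pos {α : ℝ} (hα : α ∈ Ioo (0 : ℝ) 1) {z : ℂ}
    (hz : 0 < z.re) : bernsteinIntegral α z = bernsteinIntegral α 1 * z ^ (α : ℂ) := by
  have hderiv : ∀ w ∈ {w : ℂ | 0 < w.re},
      HasDerivAt (fun w => bernsteinIntegral α w * w ^ (-α : ℂ)) 0 w := by
    intro w hw
    have hw0 : w ≠ 0 := by rintro rfl; simp at hw
    have hpow := (hasDerivAt_id w).cpow_const (c := (-α : ℂ)) (Or.inl hw)
    refine ((hasDerivAt_bernsteinIntegral hα hw).mul hpow).congr_deriv ?_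
    have hE := integral_mul_self_eq_mul_bernsteinIntegral hα hw
    simp only [id]
    rw [Complex.cpow_sub _ _ hw0, Complex.cpow_one]
    field_simp
    linear_combination w ^ (-α : ℂ) * hE
  have hconst := (convex_halfSpace_re_gt 0).is_const_of_fderivWithin_eq_zero (𝕜 := ℂ)
    (f := fun w => bernsteinIntegral α w * w ^ (-α : ℂ))
    (fun w hw => (hderiv w hw).differentiableAt.differentiableWithinAt)
    (fun w hw => by
      rw [fderivWithin_of_isOpen (isOpen_lt continuous_const Complex.continuous_re) hw]
      simpa using (hderiv w hw).hasFDerivAt.fderiv)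
    (x := z) (y := 1) hz (by simp)
  have hz0 : z ≠ 0 := by rintro rfl; simp at hz
  simp only [Complex.one_cpow, mul_one] at hconst
  rw [← hconst, mul_assoc, ← Complex.cpow_add _ _ hz0]
  simp

lemma tendsto_bernsteinIntegral_add_ofReal {α : ℝ} (hα : α ∈ Ioo (0 : ℝ) 1) {z : ℂ}
    (hz : 0 ≤ z.re) :
    Filter.Tendsto (fun ε : ℝ => bernsteinIntegral α (z + ε)) (𝓝[>] 0)
      (𝓝 (bernsteinIntegral α z)) := by
  refine tendsto_integral_filter_of_dominated_convergence
    (fun v => 2 * (1 + (‖z‖ + 1)) * (v ^ (-(1 + α)) * min 1 v))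
    (Filter.Eventually.of_forall fun ε =>
      (measurable_bernsteinIntegrand α _).aestronglyMeasurable) ?_
    ((integrableOn_rpow_mul_min hα).const_mul _) ?_
  · filter_upwards [Ioo_mem_nhdsGT (zero_lt_one (α := ℝ))] with ε hε
    filter_upwards [ae_restrict_mem measurableSet_Ioi] with v hv
    have hv' : 0 < v := hv
    have hre : 0 ≤ (z + ε).re := by simpa using add_nonneg hz hε.1.le
    refine (norm_bernsteinIntegrand_le α hre hv').trans ?_
    have hn : ‖z + ε‖ ≤ ‖z‖ + 1 := by
      refine (norm_add_le _ _).trans ?_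
      rw [Complex.norm_real, Real.norm_of_nonneg hε.1.le]
      linarith [hε.2]
    gcongr
  · refine Filter.Eventually.of_forall fun v => ?_
    have hc : Continuous fun ε : ℝ => bernsteinIntegrand α (z + ε) v := by
      unfold bernsteinIntegrand
      fun_prop
    simpa using (hc.tendsto 0).mono_left nhdsWithin_le_nhds

lemma bernsteinIntegral_eq_cpow {α : ℝ} (hα : α ∈ Ioo (0 : ℝ) 1) {z : ℂ} (hz : 0 ≤ z.re)
    (hz' : z ∈ Complex.slitPlane) :
    bernsteinIntegral α z = bernsteinIntegral α 1 * z ^ (α : ℂ) := by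
  refine tendsto_nhds_unique (tendsto_bernsteinIntegral_add_ofReal hα hz) ?_
  have hc : ContinuousAt (fun ε : ℝ => bernsteinIntegral α 1 * (z + ε) ^ (α : ℂ)) 0 := by
    refine continuousAt_const.mul (ContinuousAt.cpow (by fun_prop) continuousAt_const ?_)
    simpa using hz'
  have ht := hc.tendsto.mono_left (nhdsWithin_le_nhds (s := Ioi 0))
  simp only [Complex.ofReal_zero, add_zero] at ht
  refine ht.congr' ?_
  filter_upwards [self_mem_nhdsWithin] with ε hε
  refine (bernsteinIntegral_eq_cpow_of_re_pos hα ?_).symm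
  simpa using add_pos_of_nonneg_of_pos hz hε

lemma I_mul_ofReal_cpow (α : ℝ) {u : ℝ} (hu : u ≠ 0) :
    (Complex.I * (u : ℂ)) ^ (α : ℂ) = ((|u| ^ α : ℝ) : ℂ) *
      Complex.exp (Complex.I * ((π * α / 2 * Real.sign u : ℝ) : ℂ)) := by
  have harg : (Complex.I * (u : ℂ)).arg = π / 2 * Real.sign u := by
    rcases hu.lt_or_gt with h | h
    · have : Complex.I * (u : ℂ) = ((-u : ℝ) : ℂ) * (-Complex.I) := by push_cast; ring
      rw [this, Complex.arg_real_mul _ (neg_pos.mpr h), Complex.arg_neg_I, Real.sign_of_neg h]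
      ring
    · rw [mul_comm, Complex.arg_real_mul _ h, Complex.arg_I, Real.sign_of_pos h, mul_one]
  have hangle : π / 2 * Real.sign u * α = π * α / 2 * Real.sign u := by ring
  rw [Complex.cpow_ofReal, harg, hangle, norm_mul, Complex.norm_I, one_mul, Complex.norm_real,
    Real.norm_eq_abs, mul_comm Complex.I, Complex.exp_mul_I, ← Complex.ofReal_cos,
    ← Complex.ofReal_sin]

/-- Lemma 5.1. For `0 < α < 1` and `u ∈ ℝ`,
`(α/Γ(1−α)) ∫₀^∞ v^{−(1+α)} (1 − e^{−iuv}) dv = |u|^α e^{i(πα/2) sgn u}`. -/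
theorem stmt_13 (α : ℝ) (hα : α ∈ Set.Ioo (0 : ℝ) 1) (u : ℝ) :
    ((α / Real.Gamma (1 - α) : ℝ) : ℂ) *
        ∫ v in Set.Ioi (0 : ℝ),
          ((v ^ (-(1 + α)) : ℝ) : ℂ) * (1 - Complex.exp (-(Complex.I * (u : ℂ) * (v : ℂ))))
      = ((|u| ^ α : ℝ) : ℂ) *
          Complex.exp (Complex.I * ((π * α / 2 * Real.sign u : ℝ) : ℂ)) := by
  rcases eq_or_ne u 0 with rfl | hu
  · simp [Real.zero_rpow hα.1.ne']
  have hΓ : ((Real.Gamma (1 - α) : ℝ) : ℂ) ≠ 0 :=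
    Complex.ofReal_ne_zero.mpr (Real.Gamma_pos_of_pos (by linarith [hα.2])).ne'
  have hmain : bernsteinIntegral α (Complex.I * u)
      = bernsteinIntegral α 1 * (Complex.I * (u : ℂ)) ^ (α : ℂ) :=
    bernsteinIntegral_eq_cpow hα (by simp) (Or.inr (by simpa using hu))
  change ((α / Real.Gamma (1 - α) : ℝ) : ℂ) * bernsteinIntegral α (Complex.I * u) = _
  rw [hmain, ← I_mul_ofReal_cpow α hu, Complex.ofReal_div, div_mul_eq_mul_div, ← mul_assoc,
    mul_bernsteinIntegral_one hα, mul_div_cancel_left₀ _ hΓ]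
end
end

section
/- For every real a > 0, every x ∈ ℝ and every nonnegative integer m: ∫_ℝ t^m e^{−a t²/2} e^{i x t} dt = e^{−x²/(2a)} · ∫_ℝ (t + i x/a)^m e^{−a t²/2} dt, where both sides are (absolutely convergent) complex-valued Lebesgue integrals over ℝ. -/
noncomputable section

open MeasureTheory Complex

/-- The Gaussian `e^{−at²/2}` modulated by the character `e^{iyt}` and weighted by the power
`(t + c)^n`. -/
def modulatedGaussian (a : ℝ) (c : ℂ) (y : ℝ) (n : ℕ) (t : ℝ) : ℂ :=
  ((t : ℂ) + c) ^ n * cexp (-((a * t ^ 2 / 2 : ℝ) : ℂ)) * cexp (I * ((y * t : ℝ) : ℂ))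

lemma integrable_pow_mul_cexp_neg_mul_sq {a : ℝ} (ha : 0 < a) (n : ℕ) :
    Integrable fun t : ℝ => (t : ℂ) ^ n * cexp (-((a * t ^ 2 / 2 : ℝ) : ℂ)) := by
  have h := integrable_rpow_mul_exp_neg_mul_sq (half_pos ha) (s := n)
    (by linarith [(Nat.cast_nonneg n : (0 : ℝ) ≤ n)])
  refine h.ofReal.congr (Filter.Eventually.of_forall fun t => ?_)
  have hexp : -(a / 2) * t ^ 2 = -(a * t ^ 2 / 2) := by ring
  simp [hexp]

lemma integrable_modulatedGaussian {a : ℝ} (ha : 0 < a) (c : ℂ) (y : ℝ) (n : ℕ) :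
    Integrable (modulatedGaussian a c y n) := by
  have h : Integrable fun t : ℝ => ((t : ℂ) + c) ^ n * cexp (-((a * t ^ 2 / 2 : ℝ) : ℂ)) := by
    simp only [add_pow, Finset.sum_mul]
    refine integrable_finsetSum _ fun k _ => ?_
    refine ((integrable_pow_mul_cexp_neg_mul_sq ha k).mul_const
      (c ^ (n - k) * (n.choose k : ℂ))).congr (Filter.Eventually.of_forall fun t => ?_)
    ring
  refine h.mul_bdd (c := 1) (by fun_prop) (Filter.Eventually.of_forall fun t => ?_)
  rw [mul_comm, norm_exp_ofReal_mul_I]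

lemma hasDerivAt_modulatedGaussian (a : ℝ) (c : ℂ) (y : ℝ) (n : ℕ) (t : ℝ) :
    HasDerivAt (modulatedGaussian a c y n)
      (n * modulatedGaussian a c y (n - 1) t - a * modulatedGaussian a c y (n + 1) t
        + (a * c + I * y) * modulatedGaussian a c y n t) t := by
  have ht : HasDerivAt (fun s : ℝ => (s : ℂ)) 1 t := ofRealCLM.hasDerivAt
  have hpow := (ht.add_const c).pow n
  have hgauss := (((ht.pow 2).const_mul (a : ℂ)).div_const 2).neg.cexp
  have hchar := ((ht.const_mul (y : ℂ)).const_mul I).cexp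
  refine (((hpow.mul hgauss).mul hchar).congr_deriv ?_).congr_of_eventuallyEq
    (Filter.Eventually.of_forall fun s => ?_)
  · simp only [modulatedGaussian, Pi.mul_apply, Pi.pow_apply, Pi.neg_apply]
    push_cast
    ring
  · simp [modulatedGaussian]

/-- Integration by parts: the recurrence depends on `c` and `y` only through `a c + i y`. -/
lemma mul_integral_modulatedGaussian_succ {a : ℝ} (ha : 0 < a) (c : ℂ) (y : ℝ) (n : ℕ) :
    a * ∫ t, modulatedGaussian a c y (n + 1) t
      = n * (∫ t, modulatedGaussian a c y (n - 1) t)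
        + (a * c + I * y) * ∫ t, modulatedGaussian a c y n t := by
  have hint := integrable_modulatedGaussian ha c y
  have hpred := (hint (n - 1)).const_mul (n : ℂ)
  have hsucc := (hint (n + 1)).const_mul (a : ℂ)
  have hself := (hint n).const_mul (a * c + I * y)
  have h := integral_eq_zero_of_hasDerivAt_of_integrable
    (hasDerivAt_modulatedGaussian a c y n) ((hpred.sub hsucc).add hself) (hint n)
  rw [integral_add (by exact hpred.sub hsucc) hself, integral_sub hpred hsucc] at h
  simp only [integral_const_mul] at h
  linear_combination -h

lemma integral_modulatedGaussian_zero {a : ℝ} (ha : 0 < a) (c : ℂ) (y : ℝ) :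
    ∫ t, modulatedGaussian a c y 0 t
      = cexp (-((y ^ 2 / (2 * a) : ℝ) : ℂ)) * ∫ t, modulatedGaussian a c 0 0 t := by
  have hre : 0 < ((a / 2 : ℝ) : ℂ).re := by simpa using ha
  have hfourier (z : ℝ) : ∫ t, modulatedGaussian a c z 0 t
      = (Real.pi / ((a / 2 : ℝ) : ℂ)) ^ (1 / 2 : ℂ)
        * cexp (-(z : ℂ) ^ 2 / (4 * ((a / 2 : ℝ) : ℂ))) := by
    rw [← fourierIntegral_gaussian hre]
    refine integral_congr_ae (Filter.Eventually.of_forall fun t => ?_)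
    simp only [modulatedGaussian]
    push_cast
    ring_nf
  rw [hfourier, hfourier]
  have ha' : (a : ℂ) ≠ 0 := ofReal_ne_zero.mpr ha.ne'
  have hexp : -(y : ℂ) ^ 2 / (4 * ((a / 2 : ℝ) : ℂ)) = -((y ^ 2 / (2 * a) : ℝ) : ℂ) := by
    push_cast
    field_simp
    ring
  rw [hexp]
  simp [mul_comm]

lemma integral_modulatedGaussian_eq_shift {a : ℝ} (ha : 0 < a) (x : ℝ) (m : ℕ) :
    ∫ t, modulatedGaussian a 0 x m t
      = cexp (-((x ^ 2 / (2 * a) : ℝ) : ℂ))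
        * ∫ t, modulatedGaussian a (I * ((x / a : ℝ) : ℂ)) 0 m t := by
  have ha' : (a : ℂ) ≠ 0 := ofReal_ne_zero.mpr ha.ne'
  have hc : (a : ℂ) * (I * ((x / a : ℝ) : ℂ)) = I * x := by
    push_cast
    field_simp
  induction m using Nat.strong_induction_on with
  | _ m ih =>
    cases m with
    | zero =>
      rw [integral_modulatedGaussian_zero ha]
      simp [modulatedGaussian]
    | succ n =>
      have hl := mul_integral_modulatedGaussian_succ ha 0 x n
      have hr := mul_integral_modulatedGaussian_succ ha (I * ((x / a : ℝ) : ℂ)) 0 n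
      rw [ih n (by omega), ih (n - 1) (by omega)] at hl
      rw [hc] at hr
      apply mul_left_cancel₀ ha'
      rw [hl, mul_left_comm (a : ℂ), hr]
      simp only [ofReal_zero]
      ring

/-- Lemma 5.3. For `a > 0`, `x ∈ ℝ` and a nonnegative integer `m`,
`∫ t^m e^{−at²/2} e^{ixt} dt = e^{−x²/(2a)} ∫ (t + ix/a)^m e^{−at²/2} dt`. -/
theorem stmt_16 (a : ℝ) (ha : 0 < a) (x : ℝ) (m : ℕ) :
    (∫ t : ℝ, (t : ℂ) ^ m * Complex.exp (-((a * t ^ 2 / 2 : ℝ) : ℂ)) *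
        Complex.exp (Complex.I * ((x * t : ℝ) : ℂ)))
      = Complex.exp (-((x ^ 2 / (2 * a) : ℝ) : ℂ)) *
        ∫ t : ℝ, ((t : ℂ) + Complex.I * ((x / a : ℝ) : ℂ)) ^ m *
          Complex.exp (-((a * t ^ 2 / 2 : ℝ) : ℂ)) := by
  simpa [modulatedGaussian] using integral_modulatedGaussian_eq_shift ha x m
end
end
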